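/- Let d ≥ 2 and γ > -d + 1 with d + γ > 3. With ψ_γ as defined via the hypergeometric function (ψ_γ(ρ) = F(-γ/2,(2-γ-d)/2;d/2;ρ) for ρ < 1 and ψ_γ(ρ) = ρ^{γ/2}F(-γ/2,(2-γ-d)/2;d/2;ρ^{-1}) for ρ > 1), the function ψ_γ is twice continuously differentiable on [0,∞) and ψ_γ''(1) = (γ/2)(γ/2 - 1) Γ(d/2)Γ(d+γ-3)/(Γ((d+γ-4)/2)Γ((2d+γ-2)/2)). -/

import Mathlib

open Real Set MeasureTheory

/-- Pochhammer symbol (rising factorial) for a real argument. -/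
noncomputable def poch (x : ℝ) (n : ℕ) : ℝ := ∏ i ∈ Finset.range n, (x + i)

/-- Gauss hypergeometric series. -/
noncomputable def hyperF (a b c z : ℝ) : ℝ :=
  ∑' n : ℕ, poch a n * poch b n / (poch c n * (n.factorial : ℝ)) * z ^ n

/-- Coefficients of the hypergeometric series. -/
noncomputable def cf (a b c : ℝ) (n : ℕ) : ℝ :=
  poch a n * poch b n / (poch c n * (n.factorial : ℝ))

lemma poch_zero (x : ℝ) : poch x 0 = 1 := by simp [poch]

lemma poch_succ (x : ℝ) (n : ℕ) : poch x (n + 1) = poch x n * (x + n) := by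
  simp [poch, Finset.prod_range_succ]

lemma poch_succ' (x : ℝ) (n : ℕ) : poch x (n + 1) = x * poch (x + 1) n := by
  simp only [poch, Finset.prod_range_succ']
  rw [mul_comm]
  congr 1
  · simp
  · apply Finset.prod_congr rfl
    intro i _
    push_cast
    ring

lemma poch_pos {x : ℝ} (hx : 0 < x) (n : ℕ) : 0 < poch x n :=
  Finset.prod_pos fun i _ => by positivity

lemma cf_zero (a b c : ℝ) : cf a b c 0 = 1 := by simp [cf, poch_zero]

lemma cf_succ {c : ℝ} (a b : ℝ) (hc : 0 < c) (n : ℕ) :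
    ((n : ℝ) + 1) * cf a b c (n + 1) = cf a b c n * ((a + n) * (b + n) / (c + n)) := by
  have h1 := (poch_pos hc n).ne'
  have h2 : c + n ≠ 0 := by positivity
  have h3 : (n : ℝ) + 1 ≠ 0 := by positivity
  have h4 : (n.factorial : ℝ) ≠ 0 := by positivity
  simp only [cf, poch_succ, Nat.factorial_succ]
  push_cast
  field_simp

lemma cf_shift {c : ℝ} (a b : ℝ) (hc : 0 < c) (n : ℕ) :
    ((n : ℝ) + 1) * cf a b c (n + 1) = a * b / c * cf (a + 1) (b + 1) (c + 1) n := by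
  have h1 := (poch_pos (by linarith : 0 < c + 1) n).ne'
  have h3 : (n : ℝ) + 1 ≠ 0 := by positivity
  have h4 : (n.factorial : ℝ) ≠ 0 := by positivity
  simp only [cf, poch_succ', Nat.factorial_succ]
  push_cast
  field_simp

lemma cf_c_shift {c : ℝ} (a b : ℝ) (hc : 0 < c) (n : ℕ) :
    cf a b (c + 1) n = cf a b c n * (c / (c + n)) := by
  have h1 := (poch_pos hc n).ne'
  have h1' := (poch_pos (by linarith : 0 < c + 1) n).ne'
  have h2 : c + n ≠ 0 := by positivity
  have h4 : (n.factorial : ℝ) ≠ 0 := by positivity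
  have h5 : c * poch (c + 1) n = poch c n * (c + n) := by
    rw [← poch_succ', poch_succ]
  simp only [cf]
  field_simp
  linear_combination (-(poch a n * poch b n)) * h5

/-- Telescoping identity. -/
lemma cf_tele {c : ℝ} (a b : ℝ) (hc : 0 < c) (n : ℕ) :
    (n : ℝ) * cf a b c n - ((n : ℝ) + 1) * cf a b c (n + 1)
      = (c - a - b) * cf a b c n - (c - a) * (c - b) / c * cf a b (c + 1) n := by
  have h2 : c + n ≠ 0 := by positivity
  rw [cf_succ a b hc, cf_c_shift a b hc]
  field_simp
  ring

lemma summable_cf {a b c : ℝ} (hc : 0 < c) (hs : 0 < c - a - b) :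
    Summable fun n => |cf a b c n| := by
  obtain ⟨N, hN⟩ := exists_nat_gt (|a| + |b| + (2 * |a * b| + c * (c - a - b)) / (c - a - b))
  set s := c - a - b with hsd
  set t : ℕ → ℝ := fun n => |cf a b c n| with ht
  have key : ∀ n ≥ N, s / 2 * t n ≤ n * t n - (n + 1) * t (n + 1) := by
    intro n hn
    have hnN : (N : ℝ) ≤ n := by exact_mod_cast hn
    have hq : 0 ≤ (2 * |a * b| + c * s) / s := by positivity
    have hna : 0 < a + n := by have := neg_abs_le a; have := abs_nonneg b; linarith
    have hnb : 0 < b + n := by have := neg_abs_le b; have := abs_nonneg a; linarith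
    have hnq : (2 * |a * b| + c * s) / s < n := by
      have := abs_nonneg a; have := abs_nonneg b; linarith
    rw [div_lt_iff₀ hs] at hnq
    have hcn : 0 < c + n := by positivity
    have e : ((n : ℝ) + 1) * t (n + 1) = t n * ((a + n) * (b + n) / (c + n)) := by
      have := congrArg abs (cf_succ a b hc n)
      rw [abs_mul, abs_mul, abs_of_nonneg (by positivity : (0:ℝ) ≤ (n : ℝ) + 1),
        abs_of_pos (by positivity : 0 < (a + n) * (b + n) / (c + n))] at this
      exact this
    rw [e]
    have h : s / 2 ≤ n - (a + n) * (b + n) / (c + n) := by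
      rw [le_sub_iff_add_le, ← le_sub_iff_add_le', div_le_iff₀ hcn]
      have := le_abs_self (a * b)
      have : c = s + a + b := by rw [hsd]; ring
      nlinarith
    have ht0 : 0 ≤ t n := abs_nonneg _
    nlinarith
  have hsum : Summable fun n => t (n + N) := by
    apply summable_of_sum_range_le (c := 2 / s * (N * t N)) (fun n => abs_nonneg _)
    intro k
    have : s / 2 * ∑ i ∈ Finset.range k, t (i + N) ≤ N * t N - ((k + N : ℕ) : ℝ) * t (k + N) := by
      induction k with
      | zero => simp
      | succ k ih =>
        rw [Finset.sum_range_succ, mul_add]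
        have := key (k + N) (by omega)
        have e : k + 1 + N = k + N + 1 := by ring
        rw [e]
        push_cast at *
        linarith
    have h0 : 0 ≤ ((k + N : ℕ) : ℝ) * t (k + N) := mul_nonneg (by positivity) (abs_nonneg _)
    have h1 : s / 2 * ∑ i ∈ Finset.range k, t (i + N) ≤ N * t N := by linarith
    calc _ = 2 / s * (s / 2 * ∑ i ∈ Finset.range k, t (i + N)) := by field_simp; rfl
      _ ≤ _ := by gcongr
  exact (summable_nat_add_iff N).1 hsum

lemma tendsto_n_cf {a b c : ℝ} (hc : 0 < c) (hs : 0 < c - a - b) :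
    Filter.Tendsto (fun n : ℕ => (n : ℝ) * cf a b c n) Filter.atTop (nhds 0) := by
  have hA : Summable fun n => cf a b c n := (summable_cf hc hs).of_abs
  have hB : Summable fun n => cf a b (c + 1) n :=
    (summable_cf (by linarith) (by linarith)).of_abs
  have hd : Summable fun n : ℕ => (n : ℝ) * cf a b c n - ((n : ℝ) + 1) * cf a b c (n + 1) := by
    simp_rw [cf_tele a b hc]
    exact (hA.mul_left _).sub (hB.mul_left _)
  have hlim := hd.hasSum.tendsto_sum_nat
  have e : ∀ k : ℕ, ∑ n ∈ Finset.range k,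
      ((n : ℝ) * cf a b c n - ((n : ℝ) + 1) * cf a b c (n + 1)) = - (k * cf a b c k) := by
    intro k
    induction k with
    | zero => simp
    | succ k ih => rw [Finset.sum_range_succ, ih]; push_cast; ring
  simp_rw [e] at hlim
  have hlim := hlim.neg
  simp only [neg_neg] at hlim
  set L := -∑' n : ℕ, ((n : ℝ) * cf a b c n - ((n : ℝ) + 1) * cf a b c (n + 1)) with hL
  by_cases h0 : L = 0
  · rwa [h0] at hlim
  · exfalso
    have hpos : 0 < |L| := abs_pos.2 h0
    have hev := hlim.abs.eventually (lt_mem_nhds (by linarith : |L| / 2 < |L|))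
    apply Real.not_summable_one_div_natCast
    apply summable_of_isBigO_nat (summable_cf hc hs)
    apply Asymptotics.IsBigO.of_bound (2 / |L|)
    filter_upwards [hev, Filter.eventually_gt_atTop 0] with n hn hn0
    have hn1 : (0 : ℝ) < n := by exact_mod_cast hn0
    rw [abs_mul, abs_of_pos hn1] at hn
    rw [Real.norm_eq_abs, Real.norm_eq_abs, abs_abs, abs_of_pos (by positivity),
      div_mul_eq_mul_div, div_le_div_iff₀ hn1 hpos]
    linarith

lemma hyperF_one (a b c : ℝ) : hyperF a b c 1 = ∑' n, cf a b c n := by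
  simp [hyperF, cf]

lemma contig {a b c : ℝ} (hc : 0 < c) (hs : 0 < c - a - b) :
    c * (c - a - b) * hyperF a b c 1 = (c - a) * (c - b) * hyperF a b (c + 1) 1 := by
  have hA : Summable fun n => cf a b c n := (summable_cf hc hs).of_abs
  have hB : Summable fun n => cf a b (c + 1) n :=
    (summable_cf (by linarith) (by linarith)).of_abs
  have hS : HasSum (fun n : ℕ => (n : ℝ) * cf a b c n - ((n : ℝ) + 1) * cf a b c (n + 1))
      ((c - a - b) * hyperF a b c 1 - (c - a) * (c - b) / c * hyperF a b (c + 1) 1) := by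
    simp_rw [cf_tele a b hc, hyperF_one]
    exact (hA.hasSum.mul_left _).sub (hB.hasSum.mul_left _)
  have e : ∀ k : ℕ, ∑ n ∈ Finset.range k,
      ((n : ℝ) * cf a b c n - ((n : ℝ) + 1) * cf a b c (n + 1)) = - (k * cf a b c k) := by
    intro k
    induction k with
    | zero => simp
    | succ k ih => rw [Finset.sum_range_succ, ih]; push_cast; ring
  have h1 := hS.tendsto_sum_nat
  simp_rw [e] at h1
  have h2 := tendsto_nhds_unique h1 (tendsto_n_cf hc hs).neg
  field_simp at h2
  linarith

lemma poch_mono {x y : ℝ} (hx : 0 < x) (hxy : x ≤ y) (n : ℕ) : poch x n ≤ poch y n :=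
  Finset.prod_le_prod (fun i _ => by positivity) (fun i _ => by linarith)

lemma tendsto_hyperF_add {a b c : ℝ} (hc : 0 < c) (hs : 0 < c - a - b) :
    Filter.Tendsto (fun N : ℕ => hyperF a b (c + N) 1) Filter.atTop (nhds 1) := by
  have h1 : (1 : ℝ) = ∑' n : ℕ, if n = 0 then (1 : ℝ) else 0 := by simp
  simp_rw [hyperF_one]
  rw [h1]
  apply tendsto_tsum_of_dominated_convergence (summable_cf hc hs)
  · intro n
    rcases n with _ | n
    · simp [cf_zero]
    · simp only [cf, Nat.succ_ne_zero, if_false]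
      apply Filter.Tendsto.div_atTop tendsto_const_nhds
      apply Filter.Tendsto.atTop_mul_const (by positivity)
      have hp := poch_pos (by linarith : 0 < c + 1) n
      apply Filter.tendsto_atTop_mono (f := fun N : ℕ => (c + N) * poch (c + 1) n)
      · intro N
        rw [poch_succ']
        have := poch_mono (by linarith : 0 < c + 1) (y := c + N + 1)
          (by have : (0 : ℝ) ≤ N := by positivity
              linarith) n
        gcongr
      · apply Filter.Tendsto.atTop_mul_const hp
        exact Filter.tendsto_atTop_add_const_left _ _ tendsto_natCast_atTop_atTop
  · refine Filter.Eventually.of_forall fun N n => ?_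
    have h0 := poch_pos hc n
    have h2 : poch c n ≤ poch (c + N) n := poch_mono hc (by simp) n
    simp only [cf, Real.norm_eq_abs, abs_div, abs_mul]
    rw [abs_of_pos h0, abs_of_pos (h0.trans_le h2)]
    have : (0 : ℝ) < |(n.factorial : ℝ)| := by positivity
    gcongr

lemma poch_gammaSeq (x : ℝ) (n : ℕ) :
    Real.GammaSeq x n = (n : ℝ) ^ x * n.factorial / poch x (n + 1) := rfl

/-- Gauss's summation theorem. -/
lemma gauss {a b c : ℝ} (hc : 0 < c) (hs : 0 < c - a - b) (ha : 0 < c - a) (hb : 0 < c - b) :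
    hyperF a b c 1 = Real.Gamma c * Real.Gamma (c - a - b) /
      (Real.Gamma (c - a) * Real.Gamma (c - b)) := by
  have it : ∀ N : ℕ, hyperF a b c 1 =
      poch (c - a) N * poch (c - b) N / (poch c N * poch (c - a - b) N) *
        hyperF a b (c + N) 1 := by
    intro N
    induction N with
    | zero => simp [poch_zero]
    | succ N ih =>
      have h := contig (a := a) (b := b) (c := c + N) (by positivity) (by
        have : (0 : ℝ) ≤ N := by positivity
        linarith)
      rw [ih]
      simp only [poch_succ]
      have p1 := (poch_pos hc N).ne'
      have p2 := (poch_pos hs N).ne'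
      have q1 : c + N ≠ 0 := by positivity
      have q2 : c - a - b + N ≠ 0 := by positivity
      push_cast
      rw [← add_assoc]
      field_simp
      linear_combination (poch (c - a) N * poch (c - b) N) * h
  have hg : ∀ N : ℕ, 0 < N → poch (c - a) (N + 1) * poch (c - b) (N + 1) /
      (poch c (N + 1) * poch (c - a - b) (N + 1)) =
      Real.GammaSeq c N * Real.GammaSeq (c - a - b) N /
        (Real.GammaSeq (c - a) N * Real.GammaSeq (c - b) N) := by
    intro N hN
    rw [poch_gammaSeq, poch_gammaSeq, poch_gammaSeq,
      poch_gammaSeq]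
    have p1 := (poch_pos hc (N + 1)).ne'
    have p2 := (poch_pos hs (N + 1)).ne'
    have p3 := (poch_pos ha (N + 1)).ne'
    have p4 := (poch_pos hb (N + 1)).ne'
    have hN' : (0 : ℝ) < N := by exact_mod_cast hN
    have f : (N.factorial : ℝ) ≠ 0 := by positivity
    have r1 := (Real.rpow_pos_of_pos hN' (c - a)).ne'
    have r2 := (Real.rpow_pos_of_pos hN' (c - b)).ne'
    have r3 : (N : ℝ) ^ c * (N : ℝ) ^ (c - a - b) = (N : ℝ) ^ (c - a) * (N : ℝ) ^ (c - b) := by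
      rw [← Real.rpow_add hN', ← Real.rpow_add hN']
      congr 1
      ring
    generalize (N : ℝ) ^ c = A at *
    generalize (N : ℝ) ^ (c - a - b) = B at *
    generalize (N : ℝ) ^ (c - a) = C at *
    generalize (N : ℝ) ^ (c - b) = D at *
    field_simp
    linear_combination -r3
  have l1 : Filter.Tendsto (fun N : ℕ => poch (c - a) (N + 1) * poch (c - b) (N + 1) /
      (poch c (N + 1) * poch (c - a - b) (N + 1)) * hyperF a b (c + (N + 1 : ℕ)) 1)
      Filter.atTop (nhds (Real.Gamma c * Real.Gamma (c - a - b) /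
      (Real.Gamma (c - a) * Real.Gamma (c - b)) * 1)) := by
    apply Filter.Tendsto.mul
    · refine Filter.Tendsto.congr' (f₁ := fun N => Real.GammaSeq c N * Real.GammaSeq (c - a - b) N /
        (Real.GammaSeq (c - a) N * Real.GammaSeq (c - b) N)) ?_ ?_
      · filter_upwards [Filter.eventually_gt_atTop 0] with N hN using (hg N hN).symm
      · apply Filter.Tendsto.div
        · exact (Real.GammaSeq_tendsto_Gamma _).mul (Real.GammaSeq_tendsto_Gamma _)
        · exact (Real.GammaSeq_tendsto_Gamma _).mul (Real.GammaSeq_tendsto_Gamma _)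
        · exact mul_ne_zero (Real.Gamma_pos_of_pos ha).ne' (Real.Gamma_pos_of_pos hb).ne'
    · exact (tendsto_hyperF_add hc hs).comp (Filter.tendsto_add_atTop_nat 1)
  simp_rw [← it, mul_one] at l1
  exact tendsto_nhds_unique tendsto_const_nhds l1

lemma hyperF_continuousOn {a b c : ℝ} (hc : 0 < c) (hs : 0 < c - a - b) :
    ContinuousOn (hyperF a b c) (Icc (-1) 1) := by
  have : hyperF a b c = fun z => ∑' n : ℕ, cf a b c n * z ^ n := rfl
  rw [this]
  apply continuousOn_tsum (u := fun n => |cf a b c n|) (fun n => by fun_prop) (summable_cf hc hs)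
  intro n x hx
  rw [norm_mul, norm_pow, Real.norm_eq_abs, Real.norm_eq_abs]
  exact mul_le_of_le_one_right (abs_nonneg _) (pow_le_one₀ (abs_nonneg _) (abs_le.2 hx))

lemma hyperF_hasDerivAt {a b c : ℝ} (hc : 0 < c) (hs : 1 < c - a - b) {z : ℝ}
    (hz : z ∈ Ioo (-1 : ℝ) 1) :
    HasDerivAt (hyperF a b c) (a * b / c * hyperF (a + 1) (b + 1) (c + 1) z) z := by
  have h1 : Summable fun n => |cf (a + 1) (b + 1) (c + 1) n| :=
    summable_cf (by linarith) (by linarith)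
  have h2 : Summable fun n : ℕ => |(n : ℝ) * cf a b c n| := by
    rw [← summable_nat_add_iff 1]
    push_cast
    simp_rw [cf_shift a b hc, abs_mul (a * b / c)]
    exact h1.mul_left _
  have h3 : ∀ (n : ℕ) (y : ℝ), y ∈ Ioo (-1 : ℝ) 1 →
      ‖cf a b c n * (n * y ^ (n - 1))‖ ≤ |(n : ℝ) * cf a b c n| := by
    intro n y hy
    have : cf a b c n * (n * y ^ (n - 1)) = n * cf a b c n * y ^ (n - 1) := by ring
    rw [this, norm_mul, norm_pow, Real.norm_eq_abs, Real.norm_eq_abs]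
    exact mul_le_of_le_one_right (abs_nonneg _)
      (pow_le_one₀ (abs_nonneg _) (abs_le.2 ⟨hy.1.le, hy.2.le⟩))
  have h := hasDerivAt_tsum_of_isPreconnected (g := fun n z => cf a b c n * z ^ n)
    (g' := fun n z => cf a b c n * (n * z ^ (n - 1))) h2 isOpen_Ioo
    isPreconnected_Ioo (fun n y _ => (hasDerivAt_pow n y).const_mul _)
    h3 (y₀ := 0) (by simp)
    (summable_of_ne_finset_zero (s := {0}) (by
      intro n hn
      have : n ≠ 0 := by simpa using hn
      simp [this])) hz
  have e : ∑' n : ℕ, cf a b c n * (n * z ^ (n - 1)) =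
      a * b / c * hyperF (a + 1) (b + 1) (c + 1) z := by
    have hsm : Summable fun n : ℕ => cf a b c n * (n * z ^ (n - 1)) :=
      Summable.of_norm_bounded h2 (fun n => h3 n z hz)
    rw [hsm.tsum_eq_zero_add]
    simp only [Nat.cast_zero, zero_mul, mul_zero, zero_add, hyperF, ← tsum_mul_left]
    apply tsum_congr
    intro n
    have := cf_shift a b hc n
    simp only [Nat.add_sub_cancel]
    rw [← mul_assoc]
    change _ = a * b / c * (cf (a + 1) (b + 1) (c + 1) n * z ^ n)
    rw [← mul_assoc, ← this]
    push_cast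
    ring
  rw [e] at h
  exact h

/-- Gluing of two functions at the point one. -/
noncomputable def gl (f g : ℝ → ℝ) (x : ℝ) : ℝ := if x ≤ 1 then f x else g x

lemma gl_eq_left (f g : ℝ → ℝ) {x : ℝ} (hx : x < 1) : gl f g =ᶠ[nhds x] f := by
  filter_upwards [Iio_mem_nhds hx] with y hy
  exact if_pos (le_of_lt hy)

lemma gl_eq_right (f g : ℝ → ℝ) {x : ℝ} (hx : 1 < x) : gl f g =ᶠ[nhds x] g := by
  filter_upwards [Ioi_mem_nhds hx] with y hy
  exact if_neg (not_le_of_gt hy)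

lemma gl_continuousAt {f g : ℝ → ℝ} (hf : ContinuousOn f (Icc (-1) 1))
    (hg : ContinuousOn g (Ici 1)) (h : f 1 = g 1) {x : ℝ} (hx : -1 < x) :
    ContinuousAt (gl f g) x := by
  rcases lt_trichotomy x 1 with h1 | h1 | h1
  · exact (hf.continuousAt (Icc_mem_nhds hx h1)).congr (gl_eq_left f g h1).symm
  · subst h1
    rw [continuousAt_iff_continuous_left_right]
    constructor
    · have : ContinuousWithinAt f (Iic 1) 1 :=
        (hf 1 (by simp)).mono_of_mem_nhdsWithin (Icc_mem_nhdsLE (by norm_num))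
      exact this.congr (fun y hy => if_pos hy) (if_pos le_rfl)
    · apply (hg 1 (by simp)).congr
      · intro y hy
        rcases eq_or_lt_of_le (show (1 : ℝ) ≤ y from hy) with e | e
        · subst e; simp [gl, h]
        · exact if_neg (not_le_of_gt e)
      · simp [gl, h]
  · exact (hg.continuousAt (Ici_mem_nhds h1)).congr (gl_eq_right f g h1).symm

lemma hasDerivAt_local {f g : ℝ → ℝ} {x : ℝ} {s : Set ℝ} (hs : IsOpen s) (hx : x ∈ s)
    (f_diff : ∀ y ∈ s, y ≠ x → HasDerivAt f (g y) y) (hf : ContinuousAt f x)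
    (hg : ContinuousAt g x) : HasDerivAt f (g x) x := by
  have A : HasDerivWithinAt f (g x) (Ici x) x := by
    have hm : s ∩ Ioi x ∈ nhdsWithin x (Ioi x) :=
      Filter.inter_mem (mem_nhdsWithin_of_mem_nhds (hs.mem_nhds hx)) self_mem_nhdsWithin
    apply hasDerivWithinAt_Ici_of_tendsto_deriv (s := s ∩ Ioi x) _ hf.continuousWithinAt hm
    · have : Filter.Tendsto g (nhdsWithin x (Ioi x)) (nhds (g x)) := hg.mono_left inf_le_left
      apply this.congr' _
      filter_upwards [hm] with y hy using (f_diff y hy.1 (ne_of_gt hy.2)).deriv.symm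
    · exact fun y hy => (f_diff y hy.1 (ne_of_gt hy.2)).differentiableAt.differentiableWithinAt
  have B : HasDerivWithinAt f (g x) (Iic x) x := by
    have hm : s ∩ Iio x ∈ nhdsWithin x (Iio x) :=
      Filter.inter_mem (mem_nhdsWithin_of_mem_nhds (hs.mem_nhds hx)) self_mem_nhdsWithin
    apply hasDerivWithinAt_Iic_of_tendsto_deriv (s := s ∩ Iio x) _ hf.continuousWithinAt hm
    · have : Filter.Tendsto g (nhdsWithin x (Iio x)) (nhds (g x)) := hg.mono_left inf_le_left
      apply this.congr' _
      filter_upwards [hm] with y hy using (f_diff y hy.1 (ne_of_lt hy.2)).deriv.symm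
    · exact fun y hy => (f_diff y hy.1 (ne_of_lt hy.2)).differentiableAt.differentiableWithinAt
  simpa using B.union A

lemma gl_hasDerivAt {f g f' g' : ℝ → ℝ} (hf : ContinuousOn f (Icc (-1) 1))
    (hg : ContinuousOn g (Ici 1)) (h : f 1 = g 1) (hf' : ContinuousOn f' (Icc (-1) 1))
    (hg' : ContinuousOn g' (Ici 1)) (h' : f' 1 = g' 1)
    (df : ∀ x ∈ Ioo (-1 : ℝ) 1, HasDerivAt f (f' x) x)
    (dg : ∀ x, 1 < x → HasDerivAt g (g' x) x) {x : ℝ} (hx : -1 < x) :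
    HasDerivAt (gl f g) (gl f' g' x) x := by
  have hne : ∀ y ∈ Ioi (-1 : ℝ), y ≠ 1 → HasDerivAt (gl f g) (gl f' g' y) y := by
    intro y hy hy1
    rcases lt_or_gt_of_ne hy1 with h1 | h1
    · rw [(gl_eq_left f' g' h1).eq_of_nhds]
      exact (df y ⟨hy, h1⟩).congr_of_eventuallyEq (gl_eq_left f g h1)
    · rw [(gl_eq_right f' g' h1).eq_of_nhds]
      exact (dg y h1).congr_of_eventuallyEq (gl_eq_right f g h1)
  by_cases hx1 : x = 1
  · subst hx1
    exact hasDerivAt_local isOpen_Ioi hx hne (gl_continuousAt hf hg h hx)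
      (gl_continuousAt hf' hg' h' hx)
  · exact hne x hx hx1

/-- The `C²` gluing of `F` with its inversion. -/
lemma glue_main {F0 F1 F2 : ℝ → ℝ} (a : ℝ)
    (c0 : ContinuousOn F0 (Icc (-1) 1)) (c1 : ContinuousOn F1 (Icc (-1) 1))
    (c2 : ContinuousOn F2 (Icc (-1) 1))
    (d0 : ∀ x ∈ Ioo (-1 : ℝ) 1, HasDerivAt F0 (F1 x) x)
    (d1 : ∀ x ∈ Ioo (-1 : ℝ) 1, HasDerivAt F1 (F2 x) x)
    (h : F1 1 = -a / 2 * F0 1) :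
    ∃ ψ : ℝ → ℝ, (∀ ρ ∈ Ico (0 : ℝ) 1, ψ ρ = F0 ρ) ∧
      (∀ ρ : ℝ, 1 < ρ → ψ ρ = ρ ^ (-a) * F0 ρ⁻¹) ∧
      ContDiffOn ℝ 2 ψ (Ici 0) ∧ deriv (deriv ψ) 1 = F2 1 := by
  set G0 : ℝ → ℝ := fun ρ => ρ ^ (-a) * F0 ρ⁻¹ with hG0
  set G1 : ℝ → ℝ := fun ρ => -a * ρ ^ (-a - 1) * F0 ρ⁻¹ - ρ ^ (-a - 2) * F1 ρ⁻¹ with hG1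
  set G2 : ℝ → ℝ := fun ρ => a * (a + 1) * ρ ^ (-a - 2) * F0 ρ⁻¹
    + (2 * a + 2) * ρ ^ (-a - 3) * F1 ρ⁻¹ + ρ ^ (-a - 4) * F2 ρ⁻¹ with hG2
  have hinv : ContinuousOn (fun ρ : ℝ => ρ⁻¹) (Ici 1) :=
    continuousOn_inv₀.mono (fun x hx => by
      have : (1 : ℝ) ≤ x := hx
      simp; linarith)
  have hmaps : MapsTo (fun ρ : ℝ => ρ⁻¹) (Ici 1) (Icc (-1) 1) := by
    intro x hx
    have hx : (1 : ℝ) ≤ x := hx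
    have : 0 ≤ x⁻¹ := by positivity
    exact ⟨by linarith, inv_le_one_of_one_le₀ hx⟩
  have k0 := c0.comp hinv hmaps
  have k1 := c1.comp hinv hmaps
  have k2 := c2.comp hinv hmaps
  have hp : ∀ p : ℝ, ContinuousOn (fun ρ : ℝ => ρ ^ p) (Ici 1) := by
    intro p x hx
    have hx : (1 : ℝ) ≤ x := hx
    exact (Real.continuousAt_rpow_const x p (Or.inl (by linarith))).continuousWithinAt
  have e0 : ContinuousOn G0 (Ici 1) := (hp _).mul k0
  have e1 : ContinuousOn G1 (Ici 1) :=
    ((continuousOn_const.mul (hp _)).mul k0).sub ((hp _).mul k1)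
  have e2 : ContinuousOn G2 (Ici 1) :=
    (((continuousOn_const.mul (hp _)).mul k0).add ((continuousOn_const.mul (hp _)).mul k1)).add
      ((hp _).mul k2)
  have hD : ∀ (F F' : ℝ → ℝ), (∀ x ∈ Ioo (-1 : ℝ) 1, HasDerivAt F (F' x) x) → ∀ (p x : ℝ), 1 < x →
      HasDerivAt (fun ρ : ℝ => ρ ^ p * F ρ⁻¹) (p * x ^ (p - 1) * F x⁻¹ - x ^ (p - 2) * F' x⁻¹) x := by
    intro F F' hF p x hx
    have hx0 : 0 < x := by linarith
    have hm : x⁻¹ ∈ Ioo (-1 : ℝ) 1 := by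
      have : 0 < x⁻¹ := by positivity
      exact ⟨by linarith, inv_lt_one_of_one_lt₀ hx⟩
    have := (Real.hasDerivAt_rpow_const (p := p) (Or.inl hx0.ne')).mul
      ((hF _ hm).comp x (hasDerivAt_inv hx0.ne'))
    convert! this using 1
    have e : x ^ (p - 2) = x ^ p * (x ^ 2)⁻¹ := by
      rw [Real.rpow_sub hx0, div_eq_mul_inv]
      norm_num
    rw [e, Function.comp_apply]
    ring
  have g0 : ∀ x, 1 < x → HasDerivAt G0 (G1 x) x := fun x hx => hD F0 F1 d0 (-a) x hx
  have g1 : ∀ x, 1 < x → HasDerivAt G1 (G2 x) x := by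
    intro x hx
    have := ((hD F0 F1 d0 (-a - 1) x hx).const_mul (-a)).sub (hD F1 F2 d1 (-a - 2) x hx)
    have i1 : (fun ρ : ℝ => -a * (ρ ^ (-a - 1) * F0 ρ⁻¹)) - (fun ρ : ℝ => ρ ^ (-a - 2) * F1 ρ⁻¹)
        = G1 := by
      funext ρ
      simp only [hG1, Pi.sub_apply]
      ring
    rw [i1] at this
    convert! this using 1
    change a * (a + 1) * x ^ (-a - 2) * F0 x⁻¹
      + (2 * a + 2) * x ^ (-a - 3) * F1 x⁻¹ + x ^ (-a - 4) * F2 x⁻¹ = _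
    rw [show -a - 1 - 1 = -a - 2 by ring, show -a - 1 - 2 = -a - 3 by ring,
      show -a - 2 - 1 = -a - 3 by ring, show -a - 2 - 2 = -a - 4 by ring]
    ring
  have m0 : F0 1 = G0 1 := by simp [hG0]
  have m1 : F1 1 = G1 1 := by simp only [hG1, Real.one_rpow, inv_one]; linarith
  have m2 : F2 1 = G2 1 := by
    simp only [hG2, Real.one_rpow, inv_one, h]
    ring
  have D0 : ∀ x : ℝ, -1 < x → HasDerivAt (gl F0 G0) (gl F1 G1 x) x := fun x hx =>
    gl_hasDerivAt c0 e0 m0 c1 e1 m1 d0 g0 hx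
  have D1 : ∀ x : ℝ, -1 < x → HasDerivAt (gl F1 G1) (gl F2 G2 x) x := fun x hx =>
    gl_hasDerivAt c1 e1 m1 c2 e2 m2 d1 g1 hx
  have E0 : ∀ x ∈ Ioi (-1 : ℝ), deriv (gl F0 G0) x = gl F1 G1 x := fun x hx => (D0 x hx).deriv
  have E1 : ∀ x ∈ Ioi (-1 : ℝ), deriv (gl F1 G1) x = gl F2 G2 x := fun x hx => (D1 x hx).deriv
  refine ⟨gl F0 G0, ?_, ?_, ?_, ?_⟩
  · intro ρ hρ
    exact if_pos hρ.2.le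
  · intro ρ hρ
    exact if_neg (not_le_of_gt hρ)
  · have C1 : ContDiffOn ℝ 1 (gl F1 G1) (Ioi (-1)) := by
      rw [show (1 : WithTop ℕ∞) = 0 + 1 by simp, contDiffOn_succ_iff_deriv_of_isOpen isOpen_Ioi]
      refine ⟨fun x hx => (D1 x hx).differentiableAt.differentiableWithinAt, by simp, ?_⟩
      rw [contDiffOn_congr E1, contDiffOn_zero]
      exact fun x hx => (gl_continuousAt c2 e2 m2 hx).continuousWithinAt
    have C2 : ContDiffOn ℝ 2 (gl F0 G0) (Ioi (-1)) := by
      rw [show (2 : WithTop ℕ∞) = 1 + 1 by norm_num, contDiffOn_succ_iff_deriv_of_isOpen isOpen_Ioi]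
      refine ⟨fun x hx => (D0 x hx).differentiableAt.differentiableWithinAt, by simp, ?_⟩
      rwa [contDiffOn_congr E0]
    exact C2.mono fun x hx => lt_of_lt_of_le (by norm_num) (show (0 : ℝ) ≤ x from hx)
  · have : deriv (gl F0 G0) =ᶠ[nhds 1] gl F1 G1 := by
      filter_upwards [Ioi_mem_nhds (by norm_num : (-1 : ℝ) < 1)] with x hx using E0 x hx
    rw [this.deriv_eq, E1 1 (by simp)]
    exact if_pos le_rfl

theorem psi_C2_extension (d : ℕ) (hd : 2 ≤ d) (γ : ℝ) (hγ₁ : -(d : ℝ) + 1 < γ)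
    (hγ₃ : 3 < (d : ℝ) + γ) :
    ∃ ψ : ℝ → ℝ,
      (∀ ρ ∈ Set.Ico (0 : ℝ) 1,
        ψ ρ = hyperF (-γ / 2) ((2 - γ - (d : ℝ)) / 2) ((d : ℝ) / 2) ρ) ∧
      (∀ ρ : ℝ, 1 < ρ →
        ψ ρ = ρ ^ (γ / 2) * hyperF (-γ / 2) ((2 - γ - (d : ℝ)) / 2) ((d : ℝ) / 2) ρ⁻¹) ∧
      ContDiffOn ℝ 2 ψ (Set.Ici 0) ∧
      deriv (deriv ψ) 1 = γ / 2 * (γ / 2 - 1) *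
        (Real.Gamma ((d : ℝ) / 2) * Real.Gamma ((d : ℝ) + γ - 3) /
          (Real.Gamma (((d : ℝ) + γ - 4) / 2) * Real.Gamma ((2 * (d : ℝ) + γ - 2) / 2))) := by
  have hd' : (2 : ℝ) ≤ d := by exact_mod_cast hd
  set a := -γ / 2 with ha
  set b := (2 - γ - (d : ℝ)) / 2 with hb
  set c := (d : ℝ) / 2 with hcd
  have hc : 0 < c := by linarith
  have hs : 2 < c - a - b := by linarith
  have hca : 0 < c - a := by linarith
  have hcb : 0 < c - b := by linarith
  have hab : c - a - b - 1 = -2 * b := by rw [ha, hb, hcd]; ring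
  have hγ : γ / 2 = -a := by rw [ha]; ring
  have w0 := gauss hc (by linarith : 0 < c - a - b) hca hcb
  have w1 := gauss (a := a + 1) (b := b + 1) (c := c + 1) (by linarith) (by linarith)
    (by linarith) (by linarith)
  have w2 := gauss (a := a + 1 + 1) (b := b + 1 + 1) (c := c + 1 + 1) (by linarith) (by linarith)
    (by linarith) (by linarith)
  rw [show c + 1 - (a + 1) - (b + 1) = c - a - b - 1 by ring,
    show c + 1 - (a + 1) = c - a by ring, show c + 1 - (b + 1) = c - b by ring,
    Real.Gamma_add_one hc.ne'] at w1
  rw [show c + 1 + 1 - (a + 1 + 1) - (b + 1 + 1) = c - a - b - 2 by ring,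
    show c + 1 + 1 - (a + 1 + 1) = c - a by ring, show c + 1 + 1 - (b + 1 + 1) = c - b by ring,
    Real.Gamma_add_one (by linarith : c + 1 ≠ 0), Real.Gamma_add_one hc.ne'] at w2
  have w3 : Real.Gamma (c - a - b) = (-2 * b) * Real.Gamma (c - a - b - 1) := by
    have := Real.Gamma_add_one (s := c - a - b - 1) (by linarith)
    rw [sub_add_cancel] at this
    rw [this, hab]
  have hΓa := (Real.Gamma_pos_of_pos hca).ne'
  have hΓb := (Real.Gamma_pos_of_pos hcb).ne'
  obtain ⟨ψ, h1, h2, h3, h4⟩ := glue_main (F0 := hyperF a b c)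
    (F1 := fun z => a * b / c * hyperF (a + 1) (b + 1) (c + 1) z)
    (F2 := fun z => a * b / c * ((a + 1) * (b + 1) / (c + 1) *
      hyperF (a + 1 + 1) (b + 1 + 1) (c + 1 + 1) z)) a
    (hyperF_continuousOn hc (by linarith))
    (continuousOn_const.mul (hyperF_continuousOn (by linarith) (by linarith)))
    (continuousOn_const.mul (continuousOn_const.mul
      (hyperF_continuousOn (by linarith) (by linarith))))
    (fun x hx => hyperF_hasDerivAt hc (by linarith) hx)
    (fun x hx => (hyperF_hasDerivAt (by linarith) (by linarith) hx).const_mul _)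
    (by
      rw [w0, w1, w3]
      field_simp)
  refine ⟨ψ, h1, ?_, h3, ?_⟩
  · rw [hγ]; exact h2
  · rw [h4]
    rw [w2, hγ, show (d : ℝ) + γ - 3 = c - a - b - 2 by rw [ha, hb, hcd]; ring,
      show ((d : ℝ) + γ - 4) / 2 = -(b + 1) by rw [hb]; ring,
      show (2 * (d : ℝ) + γ - 2) / 2 = c - b by rw [hb, hcd]; ring]
    have hc1 : c + 1 ≠ 0 := by linarith
    by_cases hb1 : b + 1 = 0
    · simp [hb1, Real.Gamma_zero]
    · have hb0 : b ≠ 0 := by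
        intro h0
        linarith
      have v1 := Real.Gamma_add_one (s := -(b + 1)) (neg_ne_zero.2 hb1)
      have v2 := Real.Gamma_add_one (s := -b) (neg_ne_zero.2 hb0)
      rw [show -(b + 1) + 1 = -b by ring] at v1
      rw [show -b + 1 = c - a by rw [ha, hb, hcd]; ring, v1] at v2
      have hΓ : Real.Gamma (-(b + 1)) ≠ 0 := by
        intro h0
        rw [h0] at v2
        simp at v2
        exact hΓa v2
      rw [v2]
      field_simp
      ring
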